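/- arXiv:1910.00644 — 2 statements merged into one kernel-verified Lean document; each statement's English description precedes it below -/
import Mathlib

section
/- Let F be a finite field of characteristic 2 with q elements and let m ≥ 2. Write V = F^{2m} and let Sp_{2m}(F) be the symplectic group of matrices preserving the standard nondegenerate alternating bilinear form B on V. Let Q : V → F be a quadratic form whose polar form (Q(x+y) − Q(x) − Q(y)) equals B and which is of minus type, meaning that every F-subspace W of V on which Q vanishes identically satisfies dim W ≤ m − 1. Let K = {g ∈ Sp_{2m}(F) : Q(g·v) = Q(v) for all v ∈ V} (the orthogonal group O⁻_{2m}(q) inside Sp_{2m}(F)). Then there exists a solvable subgroup H of Sp_{2m}(F) of order q^m(q^m − 1) such that every element of Sp_{2m}(F) is a product hk with h ∈ H and k ∈ K. -/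
namespace MinusType

section Borel

variable (F E : Type*) [Field F] [Field E] [Algebra F E]

/-- The action of the unit group of a field on the additive group by multiplication by squares. -/
def squareAction : Eˣ →* MulAut (Multiplicative E) :=
  ((MulAutMultiplicative E).symm.toMonoidHom.comp (DistribMulAction.toAddAut Eˣ E)).comp
    (powMonoidHom 2)

/-- The Borel subgroup of `SL₂(E)`, as an abstract semidirect product. -/
abbrev Borel : Type _ := Multiplicative E ⋊[squareAction E] Eˣ

variable {E} in
@[simp]
theorem toAdd_squareAction (t : Eˣ) (c : Multiplicative E) :
    (squareAction E t c).toAdd = (t : E) ^ 2 * c.toAdd := by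
  change (t ^ 2) • c.toAdd = _
  simp [Units.smul_def]

theorem isSolvable_borel : Group.IsSolvable (Borel E) :=
  Group.isSolvable_of_ker_le_range SemidirectProduct.inl SemidirectProduct.rightHom
    SemidirectProduct.range_inl_eq_ker_rightHom.ge

/-- The action of the Borel subgroup of `SL₂(E)` on `E × E` by lower triangular matrices, regarded
as `F`-linear maps. -/
def borelAction : Borel E →* Module.End F (E × E) where
  toFun s :=
    { toFun := fun v => ((s.right : E)⁻¹ * v.1,
        s.right * v.2 + s.left.toAdd * ((s.right : E)⁻¹ * v.1))
      map_add' := fun v w => by ext <;> simp <;> ring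
      map_smul' := fun r v => by ext <;> simp }
  map_one' := by ext <;> simp
  map_mul' s t := by
    have hs := s.right.ne_zero
    have ht := t.right.ne_zero
    refine LinearMap.ext fun v => Prod.ext ?_ ?_
    · simp [mul_comm, mul_left_comm]
    · simp
      field_simp
      ring

variable {F E}

@[simp]
theorem borelAction_apply (s : Borel E) (v : E × E) :
    borelAction F E s v = ((s.right : E)⁻¹ * v.1,
      s.right * v.2 + s.left.toAdd * ((s.right : E)⁻¹ * v.1)) := rfl

theorem borelAction_injective : Function.Injective (borelAction F E) := by
  intro s t h
  have h₁ := LinearMap.congr_fun h (1, 0)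
  simp only [borelAction_apply, Prod.mk.injEq, mul_one, mul_zero, zero_add, inv_inj] at h₁
  obtain ⟨hr, hl⟩ := h₁
  rw [hr] at hl
  have ht := t.right.ne_zero
  refine SemidirectProduct.ext ?_ (Units.ext hr)
  exact Multiplicative.toAdd.injective (mul_right_cancel₀ (inv_ne_zero ht) hl)

theorem borelAction_det (s : Borel E) (v w : E × E) :
    (borelAction F E s v).1 * (borelAction F E s w).2 -
      (borelAction F E s v).2 * (borelAction F E s w).1 = v.1 * w.2 - v.2 * w.1 := by
  have hs := s.right.ne_zero
  simp only [borelAction_apply]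
  field_simp
  ring

theorem card_borel [Finite E] : Nat.card (Borel E) = Nat.card E * (Nat.card E - 1) := by
  rw [SemidirectProduct.card, Nat.card_units]
  rfl

end Borel

section Forms

variable {E : Type*} [Field E]

/-- The binary quadratic form `a x² + x y + b y²`. -/
def binaryForm (a b : E) (v : E × E) : E := a * v.1 ^ 2 + v.1 * v.2 + b * v.2 ^ 2

theorem ne_zero_of_binaryForm_anisotropic {a b : E}
    (h : ∀ v, binaryForm a b v = 0 → v = 0) : b ≠ 0 := by
  rintro rfl
  simpa using h (0, 1) (by simp [binaryForm])

/-- The Artin–Schreier map `s ↦ s² + s` in characteristic two. -/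
def artinSchreier (E : Type*) [Field E] [CharP E 2] : E →+ E where
  toFun s := s ^ 2 + s
  map_zero' := by simp
  map_add' s t := by rw [CharTwo.add_sq]; ring

variable [CharP E 2]

theorem index_range_artinSchreier [Finite E] : (artinSchreier E).range.index = 2 := by
  have hker : ((artinSchreier E).ker : Set E) = {0, 1} := by
    ext s
    have : s ^ 2 + s = s * (s + 1) := by ring
    simp [artinSchreier, AddMonoidHom.mem_ker, this, CharTwo.add_eq_zero]
  have hcard : Nat.card (artinSchreier E).ker = 2 := by
    change Nat.card ((artinSchreier E).ker : Set E) = 2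
    rw [hker, Nat.card_coe_set_eq, Set.ncard_pair zero_ne_one]
  have h₁ := (artinSchreier E).range.card_mul_index
  have h₂ := (artinSchreier E).ker.card_mul_index
  rw [AddSubgroup.index_ker, hcard] at h₂
  have hpos : 0 < Nat.card (artinSchreier E).range := Nat.card_pos
  nlinarith [h₁, h₂]

theorem notMem_range_of_binaryForm_anisotropic {a b : E}
    (h : ∀ v, binaryForm a b v = 0 → v = 0) : a * b ∉ (artinSchreier E).range := by
  have hb := ne_zero_of_binaryForm_anisotropic h
  rintro ⟨s, hs⟩
  have hs' : s ^ 2 + s = a * b := hs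
  have hzero : binaryForm a b (1, s / b) = 0 := by
    have : binaryForm a b (1, s / b) = (a * b + (s ^ 2 + s)) / b := by
      simp only [binaryForm]
      field_simp
      ring
    rw [this, hs', CharTwo.add_self_eq_zero, zero_div]
  simpa using h _ hzero

/-- The Borel subgroup is transitive on the anisotropic forms `a x² + x y + b y²`. -/
theorem exists_borelAction_binaryForm (F : Type*) [Field F] [Algebra F E] [Finite E] {a b a' b' : E}
    (h : ∀ v, binaryForm a b v = 0 → v = 0) (h' : ∀ v, binaryForm a' b' v = 0 → v = 0) :
    ∃ s : Borel E, ∀ v, binaryForm a b (borelAction F E s v) = binaryForm a' b' v := by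
  have hb := ne_zero_of_binaryForm_anisotropic h
  have hb' := ne_zero_of_binaryForm_anisotropic h'
  obtain ⟨r, hr⟩ : a * b + a' * b' ∈ (artinSchreier E).range := by
    rw [AddSubgroup.add_mem_iff_of_index_two index_range_artinSchreier]
    exact iff_of_false (notMem_range_of_binaryForm_anisotropic h)
      (notMem_range_of_binaryForm_anisotropic h')
  have hr : r ^ 2 + r = a * b + a' * b' := hr
  set t := (frobeniusEquiv E 2).symm (b' / b)
  have ht : t ^ 2 = b' / b := frobeniusEquiv_symm_pow_p E 2 _
  have ht0 : t ≠ 0 := by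
    rintro h0
    rw [h0] at ht
    exact div_ne_zero hb' hb (by simpa using ht.symm)
  refine ⟨⟨Multiplicative.ofAdd (r / b), Units.mk0 t ht0⟩, fun v => ?_⟩
  have htb : t ^ 2 * b = b' := by rw [ht]; field_simp
  have ha' : a' = (a + r / b + r ^ 2 / b) * t⁻¹ ^ 2 := by
    have : a' * b' = a * b + (r ^ 2 + r) := by
      rw [hr, ← add_assoc, CharTwo.add_self_eq_zero, zero_add]
    rw [← htb] at this
    field_simp
    linear_combination this
  have htwo : (2 : E) = 0 := CharTwo.two_eq_zero
  simp only [binaryForm, borelAction_apply, toAdd_ofAdd, Units.val_mk0, ha', ← htb]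
  field_simp
  linear_combination (b * v.1 * v.2 * t ^ 2 * r) * htwo

end Forms

section Trace

variable {F E : Type*} [Field F] [Finite F] [Field E] [Finite E] [Algebra F E]

theorem exists_trace_mul_eq (f : E →ₗ[F] F) : ∃ a, ∀ x, f x = Algebra.trace F E (a * x) := by
  obtain ⟨a, ha⟩ := ((Algebra.traceForm F E).toDual (traceForm_nondegenerate F E)).surjective f
  refine ⟨a, fun x => ?_⟩
  rw [← ha, LinearMap.BilinForm.toDual_def, Algebra.traceForm_apply]

theorem exists_trace_mul_sq_eq [CharP E 2] (f : E →+ F)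
    (hf : ∀ (c : F) x, f (c • x) = c ^ 2 * f x) :
    ∃ a, ∀ x, f x = Algebra.trace F E (a * x ^ 2) := by
  have : CharP F 2 := (algebraMap F E).charP (algebraMap F E).injective 2
  obtain ⟨a, ha⟩ := exists_trace_mul_eq (F := F) (E := E)
    { toFun := fun x => f ((frobeniusEquiv E 2).symm x)
      map_add' := fun x y => by simp
      map_smul' := fun c x => by
        have hc : (frobeniusEquiv E 2).symm (c • x) =
            (frobeniusEquiv F 2).symm c • (frobeniusEquiv E 2).symm x := by
          rw [RingEquiv.symm_apply_eq, frobeniusEquiv_apply, frobenius_def, smul_pow,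
            frobeniusEquiv_symm_pow_p, frobeniusEquiv_symm_pow_p]
        rw [hc, hf, frobeniusEquiv_symm_pow_p]
        rfl }
  refine ⟨a, fun x => ?_⟩
  rw [← ha (x ^ 2)]
  change f x = f ((frobeniusEquiv E 2).symm (x ^ 2))
  rw [← frobenius_def, ← frobeniusEquiv_apply, RingEquiv.symm_apply_apply]

/-- A form polarizing to `Tr (x y' - y x')` is the trace of a binary quadratic form over `E`. -/
theorem exists_trace_binaryForm_eq [CharP E 2] (Q : E × E → F)
    (hhom : ∀ (c : F) v, Q (c • v) = c ^ 2 * Q v)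
    (hpolar : ∀ v w, Q (v + w) - Q v - Q w = Algebra.trace F E (v.1 * w.2 - v.2 * w.1)) :
    ∃ a b, ∀ v, Q v = Algebra.trace F E (binaryForm a b v) := by
  have hadd v w : Q (v + w) = Q v + Q w + Algebra.trace F E (v.1 * w.2 - v.2 * w.1) := by
    linear_combination hpolar v w
  have hzero : Q 0 = 0 := by simpa using hhom 0 0
  obtain ⟨a, ha⟩ := exists_trace_mul_sq_eq (F := F)
    { toFun := fun x : E => Q (x, 0)
      map_zero' := hzero
      map_add' := fun x y => by simpa using hadd (x, 0) (y, 0) }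
    (fun c x => by simpa using hhom c (x, 0))
  obtain ⟨b, hb⟩ := exists_trace_mul_sq_eq (F := F)
    { toFun := fun y : E => Q (0, y)
      map_zero' := hzero
      map_add' := fun x y => by simpa using hadd (0, x) (0, y) }
    (fun c x => by simpa using hhom c (0, x))
  refine ⟨a, b, fun v => ?_⟩
  have h := hadd (v.1, 0) (0, v.2)
  have ha : Q (v.1, 0) = _ := ha v.1
  have hb : Q (0, v.2) = _ := hb v.2
  simp only [Prod.mk_add_mk, add_zero, zero_add, mul_zero, sub_zero, ha, hb] at h
  rw [binaryForm, map_add, map_add, h]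
  ring

/-- A form without totally singular subspaces of dimension `[E : F]` corresponds to an anisotropic
binary form over `E`. -/
theorem exists_anisotropic_binaryForm [CharP E 2] {V : Type*} [AddCommGroup V] [Module F V]
    (e : (E × E) ≃ₗ[F] V) (Q : V → F)
    (hhom : ∀ (c : F) v, Q (c • v) = c ^ 2 * Q v)
    (hpolar : ∀ v w, Q (e v + e w) - Q (e v) - Q (e w) =
      Algebra.trace F E (v.1 * w.2 - v.2 * w.1))
    (hminus : ∀ W : Submodule F V, (∀ w ∈ W, Q w = 0) → Module.finrank F W < Module.finrank F E) :
    ∃ a b, (∀ v, Q (e v) = Algebra.trace F E (binaryForm a b v)) ∧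
      ∀ v, binaryForm a b v = 0 → v = 0 := by
  obtain ⟨a, b, hab⟩ := exists_trace_binaryForm_eq (fun v => Q (e v))
    (fun c v => by simpa using hhom c (e v)) (fun v w => by simpa using hpolar v w)
  refine ⟨a, b, hab, fun v hv => by_contra fun hne => ?_⟩
  let line : E →ₗ[F] V := e.toLinearMap ∘ₗ (LinearMap.toSpanSingleton E (E × E) v).restrictScalars F
  have hinj : Function.Injective line :=
    e.injective.comp (smul_left_injective E hne)
  have hlt := hminus (LinearMap.range line) (by
    rintro _ ⟨t, rfl⟩
    have hscale : binaryForm a b (t • v) = t ^ 2 * binaryForm a b v := by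
      simp only [binaryForm, Prod.smul_fst, Prod.smul_snd, smul_eq_mul]
      ring
    change Q (e (t • v)) = 0
    rw [hab, hscale, hv, mul_zero, map_zero])
  rw [LinearMap.finrank_range_of_inj hinj] at hlt
  exact lt_irrefl _ hlt

/-- Coordinates on `E × E` in which the trace of the determinant form is the standard symplectic
form. -/
noncomputable def symplecticCoordinates {ι : Type*} [Fintype ι] [DecidableEq ι]
    (b : Module.Basis ι F E) : (E × E) ≃ₗ[F] (ι → F) × (ι → F) :=
  b.equivFun.prodCongr b.traceDual.equivFun

theorem sum_symplecticCoordinates {ι : Type*} [Fintype ι] [DecidableEq ι]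
    (b : Module.Basis ι F E) (v w : E × E) :
    ∑ i, ((symplecticCoordinates b v).1 i * (symplecticCoordinates b w).2 i -
      (symplecticCoordinates b v).2 i * (symplecticCoordinates b w).1 i) =
      Algebra.trace F E (v.1 * w.2 - v.2 * w.1) := by
  have key (x y : E) : ∑ i, b.repr x i * b.traceDual.repr y i = Algebra.trace F E (x * y) := by
    conv_rhs => rw [← b.sum_repr x]
    simp only [Finset.sum_mul, map_sum, smul_mul_assoc, map_smul, smul_eq_mul,
      Module.Basis.traceDual_repr_apply, Algebra.traceForm_apply, mul_comm y]
  rw [Finset.sum_sub_distrib, map_sub, ← key, mul_comm v.2, ← key]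
  simp [symplecticCoordinates, mul_comm]

end Trace

end MinusType

open MinusType


/-- Proposition 2.3(ii): for `q` even and `m ≥ 2`, with `K = O⁻₂ₘ(q)` the
stabilizer in `Sp₂ₘ(q)` of a minus-type quadratic form `Q` polarizing to the
standard symplectic form `B`, there is a solvable subgroup `H ≤ Sp₂ₘ(q)` of
order `qᵐ(qᵐ - 1)` with `Sp₂ₘ(q) = HK`. -/
theorem sp_factorization_minus_type {F : Type*} [Field F] [Fintype F]
    [CharP F 2] (q m : ℕ) (hq : Fintype.card F = q) (hm : 2 ≤ m)
    (B : ((Fin m → F) × (Fin m → F)) → ((Fin m → F) × (Fin m → F)) → F)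
    (hB : ∀ x y, B x y = ∑ i : Fin m, (x.1 i * y.2 i - x.2 i * y.1 i))
    (Q : ((Fin m → F) × (Fin m → F)) → F)
    (hQhom : ∀ (c : F) v, Q (c • v) = c ^ 2 * Q v)
    (hpolar : ∀ x y, Q (x + y) - Q x - Q y = B x y)
    (hminus : ∀ W : Submodule F ((Fin m → F) × (Fin m → F)),
      (∀ w ∈ W, Q w = 0) → Module.finrank F ↥W ≤ m - 1) :
    ∃ H : Subgroup (LinearMap.GeneralLinearGroup F ((Fin m → F) × (Fin m → F))),
      (∀ h ∈ H, ∀ x y, B (h.val x) (h.val y) = B x y) ∧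
      IsSolvable ↥H ∧
      Nat.card ↥H = q ^ m * (q ^ m - 1) ∧
      ∀ g : LinearMap.GeneralLinearGroup F ((Fin m → F) × (Fin m → F)),
        (∀ x y, B (g.val x) (g.val y) = B x y) →
        ∃ h ∈ H, ∃ k : LinearMap.GeneralLinearGroup F ((Fin m → F) × (Fin m → F)),
          ((∀ x y, B (k.val x) (k.val y) = B x y) ∧ (∀ v, Q (k.val v) = Q v)) ∧
          g = h * k := by
  have : NeZero m := ⟨by omega⟩
  let E := FiniteField.Extension F 2 m
  have : CharP E 2 := charP_of_injective_algebraMap (algebraMap F E).injective 2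
  have hfin : Module.finrank F E = m := FiniteField.finrank_extension F 2 m
  have hcard : Nat.card E = q ^ m := by
    rw [FiniteField.natCard_extension, Nat.card_eq_fintype_card, hq]
  let e := symplecticCoordinates (Module.finBasisOfFinrankEq F E hfin)
  have hBe v w : B (e v) (e w) = Algebra.trace F E (v.1 * w.2 - v.2 * w.1) := by
    rw [hB, sum_symplecticCoordinates]
  let ρ : Borel E →* LinearMap.GeneralLinearGroup F ((Fin m → F) × (Fin m → F)) :=
    ((LinearEquiv.conjRingEquiv e).toMonoidHom.comp (borelAction F E)).toHomUnits
  have hρ s v : (ρ s).val (e v) = e (borelAction F E s v) :=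
    congrArg (fun w => e (borelAction F E s w)) (e.symm_apply_apply v)
  have hinj : Function.Injective ρ := fun s t hst => borelAction_injective (F := F) <|
    LinearMap.ext fun v => e.injective <| by rw [← hρ, ← hρ, hst]
  have hρB s x y : B ((ρ s).val x) ((ρ s).val y) = B x y := by
    obtain ⟨v, rfl⟩ := e.surjective x
    obtain ⟨w, rfl⟩ := e.surjective y
    rw [hρ, hρ, hBe, hBe, borelAction_det]
  have hsolv := isSolvable_borel E
  refine ⟨ρ.range, ?_, Group.isSolvable_of_surjective ρ.rangeRestrict_surjective, ?_, fun g hg => ?_⟩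
  · rintro _ ⟨s, rfl⟩
    exact hρB s
  · rw [← Nat.card_congr (MonoidHom.ofInjective hinj).toEquiv, card_borel, hcard]
  have hgg x : g.val (g⁻¹.val x) = x := LinearMap.congr_fun g.mul_inv x
  have hgg' x : g⁻¹.val (g.val x) = x := LinearMap.congr_fun g.inv_mul x
  obtain ⟨a, b, hab, haniso⟩ := exists_anisotropic_binaryForm e Q hQhom
    (fun v w => by rw [hpolar, hBe]) (fun W hW => by have := hminus W hW; omega)
  obtain ⟨a', b', hab', haniso'⟩ := exists_anisotropic_binaryForm e (fun x => Q (g⁻¹.val x))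
    (fun c v => by rw [map_smul, hQhom])
    (fun v w => by rw [map_add, hpolar, ← hg, hgg, hgg, hBe])
    (fun W hW => by
      have hinjg : Function.Injective g⁻¹.val := Function.LeftInverse.injective hgg
      have := hminus (W.map g⁻¹.val) (by rintro _ ⟨w, hw, rfl⟩; exact hW w hw)
      rw [← (Submodule.equivMapOfInjective _ hinjg W).finrank_eq] at this
      omega)
  obtain ⟨s, hs⟩ := exists_borelAction_binaryForm F haniso haniso'
  refine ⟨ρ s⁻¹, ⟨s⁻¹, rfl⟩, ρ s * g, ⟨fun x y => ?_, fun x => ?_⟩, ?_⟩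
  · change B ((ρ s).val (g.val x)) ((ρ s).val (g.val y)) = B x y
    rw [hρB, hg]
  · obtain ⟨v, hv⟩ := e.surjective (g.val x)
    change Q ((ρ s).val (g.val x)) = Q x
    rw [← hv, hρ, hab, hs, ← hab', hv, hgg']
  · rw [map_inv, inv_mul_cancel_left]
end

section
/- Let G = PSL₂(11), the projective special linear group of degree 2 over the field with 11 elements. Then G admits an exact factorization G = HK where H is a subgroup of order 11 and K is a subgroup isomorphic to the alternating group A₅; that is, H ∩ K = 1 and every element of G is a product hk with h ∈ H and k ∈ K. -/
open scoped MatrixGroups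

namespace PSL2Eleven

open Equiv Matrix

/-- Two elements of `SL₂` over a field agree in `PSL₂` iff they agree up to sign. -/
theorem mk_eq_mk_iff {F : Type*} [Field F] {A B : SL(2, F)} :
    (A : PSL(2, F)) = B ↔ B = A ∨ B = -A := by
  rw [QuotientGroup.eq, Matrix.SpecialLinearGroup.mem_center_iff]
  constructor
  · rintro ⟨r, hr, h⟩
    rw [Fintype.card_fin, sq_eq_one_iff] at hr
    rcases hr with rfl | rfl
    · left
      have : A⁻¹ * B = 1 := Subtype.ext (by rw [← h, map_one]; rfl)
      rwa [inv_mul_eq_one, eq_comm] at this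
    · right
      have : A⁻¹ * B = -1 := Subtype.ext (by rw [← h, map_neg, map_one]; rfl)
      rw [inv_mul_eq_iff_eq_mul] at this
      simpa using this
  · rintro (rfl | rfl)
    · exact ⟨1, by simp, by simp⟩
    · exact ⟨-1, by simp, by rw [map_neg, map_one]; simp⟩

/-- The 5-cycle `x ↦ x + 1`. -/
def fiveCycle : alternatingGroup (Fin 5) :=
  ⟨finRotate 5, Perm.mem_alternatingGroup.2 (by decide)⟩

/-- The 3-cycle `(0 1 2)`. -/
def threeCycle : alternatingGroup (Fin 5) :=
  ⟨swap 0 1 * swap 1 2, Perm.mem_alternatingGroup.2 (by decide)⟩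

/-- The element of the Klein four-group on `{0, 1, 2, 3}` that maps `3` to `k`
(the identity if `k = 4`). -/
def klein : Fin 5 → alternatingGroup (Fin 5) :=
  ![⟨swap 0 3 * swap 1 2, Perm.mem_alternatingGroup.2 (by decide)⟩,
    ⟨swap 1 3 * swap 0 2, Perm.mem_alternatingGroup.2 (by decide)⟩,
    ⟨swap 2 3 * swap 0 1, Perm.mem_alternatingGroup.2 (by decide)⟩, 1, 1]

/-- A lift of `fiveCycle` to `SL₂(11)`. -/
def fiveCycleLift : SL(2, ZMod 11) := ⟨!![3, 0; 0, 4], by decide⟩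

/-- A lift of `threeCycle` to `SL₂(11)`. -/
def threeCycleLift : SL(2, ZMod 11) := ⟨!![4, 4; 3, 6], by decide⟩

/-- A lift of `klein` to `SL₂(11)`. -/
def kleinLift : Fin 5 → SL(2, ZMod 11) :=
  ![⟨!![0, 1; 10, 0], by decide⟩, ⟨!![3, 1; 1, 8], by decide⟩,
    ⟨!![1, 8; 8, 10], by decide⟩, 1, 1]

/-- The exponents `i, k, j` in the normal form `fiveCycle ^ i * klein k * threeCycle ^ j`. -/
def coords (σ : alternatingGroup (Fin 5)) : Fin 5 × Fin 5 × Fin 5 :=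
  let i := σ.1 4 + 1
  let k := σ.1 3 - i
  (i, k, (klein k).1 (σ.1 0 - i))

theorem eq_normal_form (σ : alternatingGroup (Fin 5)) :
    σ = fiveCycle ^ (coords σ).1.val * klein (coords σ).2.1 *
      threeCycle ^ (coords σ).2.2.val := by
  revert σ
  decide +kernel

theorem closure_generators :
    Submonoid.closure ({fiveCycle, threeCycle} ∪ Set.range klein) = ⊤ := by
  refine eq_top_iff.2 fun σ _ ↦ ?_
  rw [eq_normal_form σ]
  exact mul_mem (mul_mem (pow_mem (Submonoid.subset_closure (by simp)) _)
    (Submonoid.subset_closure (by simp))) (pow_mem (Submonoid.subset_closure (by simp)) _)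

/-- A set-theoretic lift `A₅ → SL₂(11)` of an embedding `A₅ → PSL₂(11)`. -/
def lift (σ : alternatingGroup (Fin 5)) : SL(2, ZMod 11) :=
  fiveCycleLift ^ (coords σ).1.val * kleinLift (coords σ).2.1 *
    threeCycleLift ^ (coords σ).2.2.val

theorem lift_fiveCycle_mul (τ : alternatingGroup (Fin 5)) :
    lift fiveCycle * lift τ = lift (fiveCycle * τ) ∨
      lift fiveCycle * lift τ = -lift (fiveCycle * τ) := by
  revert τ
  decide +kernel

theorem lift_threeCycle_mul (τ : alternatingGroup (Fin 5)) :
    lift threeCycle * lift τ = lift (threeCycle * τ) ∨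
      lift threeCycle * lift τ = -lift (threeCycle * τ) := by
  revert τ
  decide +kernel

theorem lift_klein_mul (k : Fin 5) (τ : alternatingGroup (Fin 5)) :
    lift (klein k) * lift τ = lift (klein k * τ) ∨
      lift (klein k) * lift τ = -lift (klein k * τ) := by
  revert k τ
  decide +kernel

theorem eq_one_of_lift_eq (σ : alternatingGroup (Fin 5)) (h : lift σ = 1 ∨ lift σ = -1) :
    σ = 1 := by
  revert σ
  decide +kernel

theorem exists_lift (c d : ZMod 11) (h : c ≠ 0 ∨ d ≠ 0) :
    ∃ σ : alternatingGroup (Fin 5),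
      c * lift σ 0 0 + d * lift σ 1 0 = 0 ∧ (c * lift σ 0 1 + d * lift σ 1 1) ^ 2 = 1 := by
  revert c d
  decide +kernel

/-- An embedding `A₅ → PSL₂(11)`. -/
def embedding : alternatingGroup (Fin 5) →* PSL(2, ZMod 11) :=
  haveI : Fact (Nat.Prime 11) := ⟨by norm_num⟩
  MonoidHom.ofClosureMEqTopLeft (fun σ ↦ (lift σ : PSL(2, ZMod 11))) closure_generators
    (congrArg _ (by decide +kernel : lift 1 = 1)) <| by
      rintro _ ((rfl | rfl) | ⟨k, rfl⟩) τ
      · exact mk_eq_mk_iff.2 (lift_fiveCycle_mul τ)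
      · exact mk_eq_mk_iff.2 (lift_threeCycle_mul τ)
      · exact mk_eq_mk_iff.2 (lift_klein_mul k τ)

theorem embedding_injective : Function.Injective embedding := by
  have : Fact (Nat.Prime 11) := ⟨by norm_num⟩
  rw [injective_iff_map_eq_one]
  intro σ hσ
  exact eq_one_of_lift_eq σ ((mk_eq_mk_iff (A := 1)).1 hσ.symm)

/-- The unipotent element `!![1, x; 0, 1]` of `SL₂(R)`. -/
def upperUnipotent {R : Type*} [CommRing R] (x : R) : SL(2, R) :=
  ⟨!![1, x; 0, 1], by simp⟩

/-- The unipotent elements of `PSL₂(F)`. -/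
def unipotent (F : Type*) [Field F] : Multiplicative F →* PSL(2, F) :=
  MonoidHom.mk' (fun x ↦ (upperUnipotent x.toAdd : PSL(2, F))) fun x y ↦
    congrArg _ (Subtype.ext (by
      rw [Matrix.SpecialLinearGroup.coe_mul]; simp [upperUnipotent, add_comm]) :
      upperUnipotent (x * y).toAdd = upperUnipotent x.toAdd * upperUnipotent y.toAdd)

theorem unipotent_injective (F : Type*) [Field F] : Function.Injective (unipotent F) := by
  rw [injective_iff_map_eq_one]
  intro x hx
  rcases (mk_eq_mk_iff (A := 1) (B := upperUnipotent x.toAdd)).1 hx.symm with h | h <;>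
    simpa [upperUnipotent] using congrArg (fun A : SL(2, F) ↦ A 0 1) h

/-- A matrix in `SL₂` with bottom row `(0, ±1)` is unipotent up to sign. -/
theorem mk_mem_range_unipotent {F : Type*} [Field F] (A : SL(2, F))
    (h₀ : A 1 0 = 0) (h₁ : A 1 1 ^ 2 = 1) : (A : PSL(2, F)) ∈ (unipotent F).range := by
  have hdet := A.det_coe
  rw [Matrix.det_fin_two, h₀] at hdet
  refine ⟨.ofAdd (A 0 1 * A 1 1), mk_eq_mk_iff.2 ?_⟩
  rcases sq_eq_one_iff.1 h₁ with h | h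
  · left
    ext i j
    fin_cases i <;> fin_cases j <;> simp_all [upperUnipotent]
  · right
    ext i j
    rw [Matrix.SpecialLinearGroup.coe_neg]
    fin_cases i <;> fin_cases j <;> simp_all [upperUnipotent, neg_eq_iff_eq_neg]

end PSL2Eleven

open PSL2Eleven in
/-- `PSL₂(11)` admits an exact factorization `G = HK` with `H` of order `11`
and `K ≅ A₅`. -/
theorem psl2_11_exact_factorization :
    ∃ H K : Subgroup (Matrix.ProjectiveSpecialLinearGroup (Fin 2) (ZMod 11)),
      Nat.card H = 11 ∧ Nonempty (K ≃* alternatingGroup (Fin 5)) ∧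
      H ⊓ K = ⊥ ∧
      ∀ g : Matrix.ProjectiveSpecialLinearGroup (Fin 2) (ZMod 11),
        ∃ h ∈ H, ∃ k ∈ K, g = h * k := by
  have : Fact (Nat.Prime 11) := ⟨by norm_num⟩
  have hH : Nat.card (unipotent (ZMod 11)).range = 11 := by
    rw [← Nat.card_congr (MonoidHom.ofInjective (unipotent_injective _)).toEquiv]
    simp
  let e := MonoidHom.ofInjective embedding_injective
  refine ⟨(unipotent (ZMod 11)).range, embedding.range, hH, ⟨e.symm⟩, ?_, fun g ↦ ?_⟩
  · refine (Subgroup.disjoint_of_coprime_natCard ?_).eq_bot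
    rw [hH, ← Nat.card_congr e.toEquiv, nat_card_alternatingGroup, Nat.card_fin]
    decide
  · obtain ⟨A, rfl⟩ := QuotientGroup.mk_surjective g
    have hA : A 1 0 ≠ 0 ∨ A 1 1 ≠ 0 := by
      by_contra! h
      have := A.det_coe
      rw [Matrix.det_fin_two, h.1, h.2] at this
      simp at this
    obtain ⟨σ, h₀, h₁⟩ := exists_lift _ _ hA
    refine ⟨_, mk_mem_range_unipotent (A * lift σ) ?_ ?_, _, ⟨σ⁻¹, rfl⟩, ?_⟩
    · simpa [Matrix.mul_apply, Fin.sum_univ_two] using h₀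
    · simpa [Matrix.mul_apply, Fin.sum_univ_two] using h₁
    · rw [map_inv, eq_mul_inv_iff_mul_eq]
      rfl
end
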